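/- arXiv:1302.0119 — 3 statements merged into one kernel-verified Lean document; each statement's English description precedes it below -/
import Mathlib

section
/- There exists a constant C̄ > 0 such that |(−Δ)^{σ/2} φ_1(x)| ≤ C̄ / (1 + |x|^{N+σ}) for all x ∈ ℝ^N. -/
open MeasureTheory Real Filter

/-- The normalization constant `C_{N,σ}` of the fractional Laplacian. -/
noncomputable def fracC (N : ℕ) (σ : ℝ) : ℝ :=
  2 ^ (σ - 1) * σ * Real.Gamma (((N : ℝ) + σ) / 2) /
    (Real.pi ^ ((N : ℝ) / 2) * Real.Gamma (1 - σ / 2))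

/-- The fractional Laplacian of order `σ/2`, as the absolutely convergent
symmetrized singular integral. -/
noncomputable def fracLap (N : ℕ) (σ : ℝ)
    (g : EuclideanSpace ℝ (Fin N) → ℝ) (x : EuclideanSpace ℝ (Fin N)) : ℝ :=
  (fracC N σ / 2) *
    ∫ z : EuclideanSpace ℝ (Fin N),
      (2 * g x - g (x + z) - g (x - z)) / ‖z‖ ^ ((N : ℝ) + σ)

lemma radial_integrable (N : ℕ) (hN : 1 ≤ N) (σ : ℝ) (hσ0 : 0 < σ) (hσ2 : σ < 2) (M : ℝ) :
    Integrable (fun z : EuclideanSpace ℝ (Fin N) =>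
      (fun r : ℝ => if r < 1 then M * r ^ (2 - ((N:ℝ) + σ)) else 4 * r ^ (-((N:ℝ) + σ))) ‖z‖) := by
  have : Nonempty (Fin N) := ⟨⟨0, hN⟩⟩
  have hcast : ((N - 1 : ℕ) : ℝ) = (N : ℝ) - 1 := by push_cast [hN]; ring
  refine (integrable_fun_norm_addHaar (E := EuclideanSpace ℝ (Fin N)) volume
    (f := fun r : ℝ => if r < 1 then M * r ^ (2 - ((N:ℝ) + σ)) else 4 * r ^ (-((N:ℝ) + σ)))).2 ?_
  simp only [finrank_euclideanSpace, Fintype.card_fin, smul_eq_mul]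
  have hU : Set.Ioi (0:ℝ) = Set.Ioo 0 1 ∪ Set.Ici 1 := by
    rw [Set.Ioo_union_Ici_eq_Ioi one_pos]
  rw [hU]
  refine IntegrableOn.union ?_ ?_
  · have h : IntegrableOn (fun x : ℝ => x ^ (1 - σ)) (Set.Ioo 0 1) :=
      (intervalIntegral.integrableOn_Ioo_rpow_iff one_pos).2 (by linarith)
    refine IntegrableOn.congr_fun (h.const_mul M) ?_ measurableSet_Ioo
    intro r hr
    simp only [hr.2, if_true]
    rw [← Real.rpow_natCast, hcast, mul_left_comm, ← Real.rpow_add hr.1]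
    congr 2; ring
  · have h : IntegrableOn (fun x : ℝ => x ^ (-1 - σ)) (Set.Ici 1) :=
      (integrableOn_Ici_iff_integrableOn_Ioi).2
        (integrableOn_Ioi_rpow_of_lt (by linarith) one_pos)
    refine IntegrableOn.congr_fun (h.const_mul 4) ?_ measurableSet_Ici
    intro r hr
    have hr1 : (1:ℝ) ≤ r := hr
    simp only [not_lt.2 hr1, if_false]
    rw [← Real.rpow_natCast, hcast, mul_left_comm, ← Real.rpow_add (by linarith)]
    congr 2; ring

lemma second_diff {E : Type*} [NormedAddCommGroup E] [NormedSpace ℝ E] (φ : E → ℝ)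
    (h : ContDiff ℝ 2 φ) (hc : HasCompactSupport φ) :
    ∃ M : ℝ, 0 ≤ M ∧ ∀ x z, |2 * φ x - φ (x + z) - φ (x - z)| ≤ M * ‖z‖ ^ 2 := by
  obtain ⟨K, hK⟩ := ContDiff.lipschitzWith_of_hasCompactSupport (𝕂 := ℝ) (n := 1)
    (hc.fderiv ℝ) (h.fderiv_right (by norm_num)) (by norm_num)
  refine ⟨2 * K, by positivity, fun x z => ?_⟩
  have hd : Differentiable ℝ φ := h.differentiable (by norm_num)
  have hder : ∀ w : E, HasFDerivAt (fun w => φ (x + w) + φ (x - w))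
      (fderiv ℝ φ (x + w) - fderiv ℝ φ (x - w)) w := by
    intro w
    have h1 : HasFDerivAt (fun w => φ (x + w)) (fderiv ℝ φ (x + w)) w := by
      have := (hd (x + w)).hasFDerivAt.comp w ((hasFDerivAt_id w).const_add x)
      simpa using! this
    have h2 : HasFDerivAt (fun w => φ (x - w)) (-fderiv ℝ φ (x - w)) w := by
      have := (hd (x - w)).hasFDerivAt.comp w ((hasFDerivAt_id w).const_sub x)
      simpa using! this
    simpa [sub_eq_add_neg] using! h1.add h2
  have hb := (convex_closedBall (0:E) ‖z‖).norm_image_sub_le_of_norm_hasFDerivWithin_le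
    (f := fun w => φ (x + w) + φ (x - w))
    (f' := fun w => fderiv ℝ φ (x + w) - fderiv ℝ φ (x - w)) (C := 2 * K * ‖z‖)
    (x := 0) (y := z)
    (fun w _ => (hder w).hasFDerivWithinAt) (fun w hw => by
      have h1 := hK.dist_le_mul (x + w) (x - w)
      rw [dist_eq_norm, dist_eq_norm] at h1
      have h2 : x + w - (x - w) = (2:ℝ) • w := by rw [two_smul]; abel
      rw [h2, norm_smul] at h1
      have h3 : ‖w‖ ≤ ‖z‖ := by simpa using hw
      have h4 : (0:ℝ) ≤ K := K.2
      have : (K:ℝ) * ‖w‖ ≤ K * ‖z‖ := by gcongr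
      norm_num at h1
      linarith) (by simp) (by simp)
  rw [abs_sub_comm] at *
  simp only [add_zero, sub_zero, Real.norm_eq_abs] at hb
  have e : |2 * φ x - φ (x + z) - φ (x - z)| = |φ (x + z) + φ (x - z) - (φ x + φ x)| := by
    rw [← abs_neg]; congr 1; ring
  rw [abs_sub_comm, e]
  linarith

/-- Decay estimate: `|(−Δ)^{σ/2} φ_1(x)| ≤ C̄ / (1 + |x|^{N+σ})` for all `x`. -/
theorem fracLap_cutoff_decay
    (N : ℕ) (hN : 1 ≤ N) (σ : ℝ) (hσ0 : 0 < σ) (hσ2 : σ < 2)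
    (η : ℝ → ℝ) (hη_smooth : ContDiff ℝ (⊤ : ℕ∞) η)
    (hη_range : ∀ s : ℝ, 0 ≤ s → η s ∈ Set.Icc (0 : ℝ) 1)
    (hη_mono : AntitoneOn η (Set.Ici 0))
    (hη_one : ∀ s : ℝ, 0 ≤ s → s ≤ 1 → η s = 1)
    (hη_zero : ∀ s : ℝ, 2 ≤ s → η s = 0) :
    ∃ C > 0, ∀ x : EuclideanSpace ℝ (Fin N),
      |fracLap N σ (fun y => η ‖y‖) x| ≤ C / (1 + ‖x‖ ^ ((N : ℝ) + σ)) := by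
  set φ : EuclideanSpace ℝ (Fin N) → ℝ := fun y => η ‖y‖ with hφ
  have hp : 0 < (N : ℝ) + σ := by positivity
  have h0 : ∀ y, 0 ≤ φ y := fun y => (hη_range _ (norm_nonneg y)).1
  have h1 : ∀ y, φ y ≤ 1 := fun y => (hη_range _ (norm_nonneg y)).2
  have hsm : ContDiff ℝ 2 φ := by
    rw [contDiff_iff_contDiffAt]
    intro y
    by_cases hy : y = 0
    · have : φ =ᶠ[nhds y] fun _ => 1 := by
        filter_upwards [Metric.ball_mem_nhds y one_pos] with w hw
        subst hy
        exact hη_one _ (norm_nonneg _) (by simpa using (le_of_lt (mem_ball_zero_iff.1 hw)))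
      exact contDiffAt_const.congr_of_eventuallyEq this
    · have h2 : ContDiff ℝ 2 η := contDiff_infty.1 hη_smooth 2
      exact h2.contDiffAt.comp y (contDiffAt_norm ℝ hy)
  have hcs : HasCompactSupport φ := by
    refine HasCompactSupport.intro (isCompact_closedBall 0 2) fun y hy => ?_
    exact hη_zero _ (by simp at hy; exact hy.le)
  have hint : Integrable φ := hsm.continuous.integrable_of_hasCompactSupport hcs
  obtain ⟨M, hM0, hM⟩ := second_diff φ hsm hcs
  have hG := radial_integrable N hN σ hσ0 hσ2 M
  set G : EuclideanSpace ℝ (Fin N) → ℝ := fun z => (fun r : ℝ => if r < 1 then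
    M * r ^ (2 - ((N:ℝ) + σ)) else 4 * r ^ (-((N:ℝ) + σ))) ‖z‖ with hGdef
  set p : ℝ := (N : ℝ) + σ with hpdef
  set I : EuclideanSpace ℝ (Fin N) → ℝ := fun x =>
    ∫ z : EuclideanSpace ℝ (Fin N), (2 * φ x - φ (x + z) - φ (x - z)) / ‖z‖ ^ p with hI
  have hG0 : ∀ z, 0 ≤ G z := by
    intro z
    simp only [hGdef]
    split_ifs <;> positivity
  have hA : ∀ x, |I x| ≤ ∫ z, G z := by
    intro x
    rw [← Real.norm_eq_abs]
    refine norm_integral_le_of_norm_le hG (Eventually.of_forall fun z => ?_)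
    rw [norm_div, Real.norm_eq_abs, Real.norm_eq_abs, abs_of_nonneg (a := ‖z‖ ^ p) (by positivity)]
    rcases eq_or_ne z 0 with rfl | hz
    · rw [norm_zero, Real.zero_rpow hp.ne', div_zero]; exact hG0 0
    have hz' : 0 < ‖z‖ := norm_pos_iff.2 hz
    simp only [hGdef]
    split_ifs with hlt
    · rw [Real.rpow_sub hz', ← mul_div_assoc]
      gcongr
      have := hM x z
      exact_mod_cast this
    · rw [Real.rpow_neg hz'.le, ← div_eq_mul_inv]
      gcongr
      rw [abs_le]
      constructor <;> linarith [h0 x, h1 x, h0 (x+z), h1 (x+z), h0 (x-z), h1 (x-z)]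
  have hB : ∀ x : EuclideanSpace ℝ (Fin N), 4 ≤ ‖x‖ →
      |I x| ≤ (2 * ∫ z, φ z) * 2 ^ p / ‖x‖ ^ p := by
    intro x hx
    have hx0 : φ x = 0 := hη_zero _ (by linarith)
    have hi1 : Integrable (fun z => φ (x + z)) := hint.comp_add_left x
    have hi2 : Integrable (fun z => φ (x - z)) := hint.comp_sub_left x
    have e : ∫ z, (φ (x + z) + φ (x - z)) * (2 ^ p / ‖x‖ ^ p)
        = (2 * ∫ z, φ z) * 2 ^ p / ‖x‖ ^ p := by
      rw [integral_mul_const, integral_add hi1 hi2, integral_add_left_eq_self φ x,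
        integral_sub_left_eq_self φ volume x]
      ring
    rw [← e, ← Real.norm_eq_abs]
    refine norm_integral_le_of_norm_le ((hi1.add hi2).mul_const _)
      (Eventually.of_forall fun z => ?_)
    have hs : 0 ≤ φ (x + z) + φ (x - z) := add_nonneg (h0 _) (h0 _)
    rw [norm_div, Real.norm_eq_abs, Real.norm_eq_abs, abs_of_nonneg (a := ‖z‖ ^ p) (by positivity),
      hx0, show 2 * (0:ℝ) - φ (x + z) - φ (x - z) = -(φ (x + z) + φ (x - z)) by ring, abs_neg,
      abs_of_nonneg hs]
    by_cases hz : ‖x‖ / 2 ≤ ‖z‖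
    · rw [div_eq_mul_inv]
      refine mul_le_mul_of_nonneg_left ?_ hs
      rw [← Real.div_rpow (by norm_num) (by linarith), ← Real.inv_rpow (norm_nonneg z)]
      refine Real.rpow_le_rpow (by positivity) ?_ hp.le
      rw [show (2:ℝ) / ‖x‖ = (‖x‖ / 2)⁻¹ by rw [inv_div]]
      exact inv_anti₀ (by linarith) hz
    · have a1 : φ (x + z) = 0 := hη_zero _ (by
        have := norm_sub_norm_le x (-z)
        rw [norm_neg, sub_neg_eq_add] at this
        linarith)
      have a2 : φ (x - z) = 0 := hη_zero _ (by
        have := norm_sub_norm_le x z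
        linarith)
      simp [a1, a2]
  have hAn : 0 ≤ ∫ z, G z := integral_nonneg hG0
  have hBn : 0 ≤ ∫ z, φ z := integral_nonneg h0
  have key : ∀ x, fracLap N σ φ x = fracC N σ / 2 * I x := fun x => rfl
  generalize (∫ z, G z) = A at *
  generalize (∫ z, φ z) = B at *
  refine ⟨|fracC N σ / 2| * (A * (1 + 4 ^ p) + 2 * (2 * B * 2 ^ p)) + 1, by positivity,
    fun x => ?_⟩
  rw [key, abs_mul, le_div_iff₀ (by positivity), mul_assoc]
  have : |I x| * (1 + ‖x‖ ^ p) ≤ A * (1 + 4 ^ p) + 2 * (2 * B * 2 ^ p) := by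
    have q1 : 0 ≤ A * (1 + 4 ^ p) := by positivity
    have q2 : 0 ≤ 2 * (2 * B * 2 ^ p) := by positivity
    rcases le_total ‖x‖ 4 with hx | hx
    · have : |I x| * (1 + ‖x‖ ^ p) ≤ A * (1 + 4 ^ p) := by
        gcongr
        exact hA x
      linarith
    · have hxp : 1 ≤ ‖x‖ ^ p := Real.one_le_rpow (by linarith) hp.le
      have hb := hB x hx
      rw [le_div_iff₀ (by linarith)] at hb
      have : |I x| * 1 ≤ |I x| * ‖x‖ ^ p := by gcongr
      linarith
  have := mul_le_mul_of_nonneg_left this (abs_nonneg (fracC N σ / 2))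
  linarith
end

section
/- Let r satisfy max{N/α, 2/σ} < r < N/σ. Then there exists a constant C > 0 such that ∫_{ℝ^N} ρ(y) |x−y|^{σ−N} dy ≤ C |x|^{σ−N/r} for almost every x ∈ ℝ^N. -/
open MeasureTheory Real Filter

lemma riesz_aux_ball (N : ℕ) (hN : 3 ≤ N) (s : ℝ) (hs : s < N) :
    ∫⁻ z : EuclideanSpace ℝ (Fin N),
      (Metric.ball (0 : EuclideanSpace ℝ (Fin N)) (1/2)).indicator
        (fun z => ENNReal.ofReal (‖z‖ ^ (-s))) z < ⊤ := by
  rw [lintegral_indicator Metric.isOpen_ball.measurableSet]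
  have h : IntegrableOn (fun z : EuclideanSpace ℝ (Fin N) => ‖z‖ ^ (-s))
      (Metric.ball 0 (1/2)) := by
    apply integrableOn_ball_of_norm_le_rpow (C := 1) (α := s) (by simp; omega) (by simpa using hs)
    · refine Eventually.of_forall fun z => ?_
      rw [Real.norm_of_nonneg (by positivity), one_mul]
    · exact Measurable.aestronglyMeasurable (by fun_prop)
  exact h.lintegral_lt_top

lemma riesz_aux_unif (N : ℕ) (hN : 3 ≤ N) (σ β : ℝ) (h0 : 0 < σ) (h1 : σ < β) (h2 : β < N) :
    ∃ M : ℝ, 0 < M ∧ ∀ e : EuclideanSpace ℝ (Fin N), ‖e‖ = 1 →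
      ∫⁻ z : EuclideanSpace ℝ (Fin N),
        ENNReal.ofReal (‖z‖ ^ (-β) * ‖e - z‖ ^ (σ - (N : ℝ))) ≤ ENNReal.ofReal M := by
  have hA := riesz_aux_ball N hN β h2
  have hB := riesz_aux_ball N hN (N - σ) (by linarith)
  have hD : ∫⁻ z : EuclideanSpace ℝ (Fin N), ENNReal.ofReal ((1 + ‖z‖) ^ (-(β + N - σ))) < ⊤ := by
    apply finite_integral_one_add_norm
    simp; linarith
  set A := ∫⁻ z : EuclideanSpace ℝ (Fin N),
      (Metric.ball (0 : EuclideanSpace ℝ (Fin N)) (1/2)).indicator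
        (fun z => ENNReal.ofReal (‖z‖ ^ (-β))) z with hAdef
  set B := ∫⁻ z : EuclideanSpace ℝ (Fin N),
      (Metric.ball (0 : EuclideanSpace ℝ (Fin N)) (1/2)).indicator
        (fun z => ENNReal.ofReal (‖z‖ ^ (-(N - σ)))) z with hBdef
  set D := ∫⁻ z : EuclideanSpace ℝ (Fin N), ENNReal.ofReal ((1 + ‖z‖) ^ (-(β + N - σ))) with hDdef
  set a := ENNReal.ofReal ((1/2 : ℝ) ^ (σ - (N : ℝ)))
  set b := ENNReal.ofReal ((1/2 : ℝ) ^ (-β))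
  set d := ENNReal.ofReal ((1/3 : ℝ) ^ (σ - (N : ℝ)) * (1/3 : ℝ) ^ (-(β + N - σ)))
  have hfin : a * A + b * B + d * D < ⊤ := by
    refine ENNReal.add_lt_top.2 ⟨ENNReal.add_lt_top.2 ⟨?_, ?_⟩, ?_⟩ <;>
      exact ENNReal.mul_lt_top ENNReal.ofReal_lt_top (by assumption)
  refine ⟨(a * A + b * B + d * D).toReal + 1, by positivity, fun e he => ?_⟩
  refine le_trans ?_ (ENNReal.ofReal_le_ofReal (le_add_of_nonneg_right zero_le_one))
  rw [ENNReal.ofReal_toReal hfin.ne]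
  have hBe : B = ∫⁻ z : EuclideanSpace ℝ (Fin N),
      (Metric.ball (0 : EuclideanSpace ℝ (Fin N)) (1/2)).indicator
        (fun z => ENNReal.ofReal (‖z‖ ^ (-(N - σ)))) (e - z) := by
    rw [hBdef]
    exact (lintegral_sub_left_eq_self (μ := volume) _ e).symm
  have hm : ∀ s : ℝ, Measurable ((Metric.ball (0 : EuclideanSpace ℝ (Fin N)) (1/2)).indicator
        (fun z => ENNReal.ofReal (‖z‖ ^ (-s)))) := fun s =>
    Measurable.indicator (by fun_prop) Metric.isOpen_ball.measurableSet
  have hme : Measurable fun z : EuclideanSpace ℝ (Fin N) =>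
      (Metric.ball (0 : EuclideanSpace ℝ (Fin N)) (1/2)).indicator
        (fun z => ENNReal.ofReal (‖z‖ ^ (-(N - σ)))) (e - z) :=
    (hm _).comp (measurable_const.sub measurable_id)
  rw [hBe, hAdef, hDdef, ← lintegral_const_mul _ (hm β),
    ← lintegral_const_mul _ hme,
    ← lintegral_const_mul _ (by fun_prop),
    ← lintegral_add_left ((hm β).const_mul _),
    ← lintegral_add_right _ (by fun_prop)]
  refine lintegral_mono fun z => ?_
  have htri : ‖e‖ ≤ ‖e - z‖ + ‖z‖ := by simpa using norm_add_le (e - z) z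
  have htri2 : ‖z‖ ≤ ‖e - z‖ + ‖e‖ := by
    have := norm_sub_le e (e - z)
    rw [sub_sub_cancel] at this
    linarith
  by_cases hz : ‖z‖ < 1/2
  · have hz' : z ∈ Metric.ball (0 : EuclideanSpace ℝ (Fin N)) (1/2) := by simpa using hz
    refine le_trans ?_ le_self_add
    refine le_trans ?_ le_self_add
    rw [Set.indicator_of_mem hz', ← ENNReal.ofReal_mul (by positivity), mul_comm]
    refine ENNReal.ofReal_le_ofReal ?_
    refine mul_le_mul_of_nonneg_right ?_ (by positivity)
    exact rpow_le_rpow_of_nonpos (by norm_num) (by linarith) (by linarith)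
  by_cases hez : ‖e - z‖ < 1/2
  · have hz' : e - z ∈ Metric.ball (0 : EuclideanSpace ℝ (Fin N)) (1/2) := by
      simpa using hez
    refine le_trans ?_ le_self_add
    refine le_trans ?_ le_add_self
    rw [Set.indicator_of_mem hz', ← ENNReal.ofReal_mul (by positivity)]
    refine ENNReal.ofReal_le_ofReal ?_
    rw [neg_sub]
    refine mul_le_mul_of_nonneg_right ?_ (by positivity)
    exact rpow_le_rpow_of_nonpos (by norm_num) (by linarith) (by linarith)
  · refine le_trans ?_ le_add_self
    push Not at hz hez
    rw [← ENNReal.ofReal_mul (by positivity)]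
    refine ENNReal.ofReal_le_ofReal ?_
    have hzp : 0 < ‖z‖ := by linarith
    calc ‖z‖ ^ (-β) * ‖e - z‖ ^ (σ - (N : ℝ))
        ≤ ‖z‖ ^ (-β) * (1/3 * ‖z‖) ^ (σ - (N : ℝ)) := by
          refine mul_le_mul_of_nonneg_left ?_ (by positivity)
          exact rpow_le_rpow_of_nonpos (by positivity) (by linarith) (by linarith)
      _ = (1/3 : ℝ) ^ (σ - (N : ℝ)) * ‖z‖ ^ (-(β + N - σ)) := by
          rw [mul_rpow (by norm_num) hzp.le, mul_left_comm, ← rpow_add hzp]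
          congr 2; ring
      _ ≤ (1/3 : ℝ) ^ (σ - (N : ℝ)) * (1/3 * (1 + ‖z‖)) ^ (-(β + N - σ)) := by
          refine mul_le_mul_of_nonneg_left ?_ (by positivity)
          exact rpow_le_rpow_of_nonpos (by positivity) (by linarith) (by linarith)
      _ = _ := by
          rw [mul_rpow (by norm_num) (by positivity), mul_assoc]

lemma riesz_aux_bound (N : ℕ) (ρ : EuclideanSpace ℝ (Fin N) → ℝ) (hρc : Continuous ρ)
    (C R α β : ℝ) (hC : 0 < C) (hR : 0 < R) (h0 : 0 < β) (hα : β < α)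
    (hdecay : ∀ x : EuclideanSpace ℝ (Fin N), R ≤ ‖x‖ → ρ x ≤ C * ‖x‖ ^ (-α)) :
    ∃ K : ℝ, 0 < K ∧ ∀ x, x ≠ 0 → ρ x ≤ K * ‖x‖ ^ (-β) := by
  obtain ⟨m, hm⟩ := (isCompact_closedBall (0 : EuclideanSpace ℝ (Fin N)) R).exists_bound_of_continuousOn
    hρc.continuousOn
  refine ⟨C * R ^ (β - α) + |m| * R ^ β, by positivity, fun x hx => ?_⟩
  have hxp : 0 < ‖x‖ := norm_pos_iff.2 hx
  rw [add_mul]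
  rcases le_total R ‖x‖ with h | h
  · have : C * ‖x‖ ^ (-α) ≤ C * R ^ (β - α) * ‖x‖ ^ (-β) := by
      rw [mul_assoc]
      refine mul_le_mul_of_nonneg_left ?_ hC.le
      calc ‖x‖ ^ (-α) = ‖x‖ ^ (β - α) * ‖x‖ ^ (-β) := by
            rw [← rpow_add hxp]; congr 1; ring
        _ ≤ _ := mul_le_mul_of_nonneg_right
            (rpow_le_rpow_of_nonpos hR h (by linarith)) (by positivity)
    have h3 : 0 ≤ |m| * R ^ β * ‖x‖ ^ (-β) := by positivity
    linarith [hdecay x h]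
  · have h1 : ρ x ≤ |m| := (le_abs_self _).trans ((hm x (by simpa using h)).trans (le_abs_self _))
    have h2 : 1 ≤ R ^ β * ‖x‖ ^ (-β) := by
      rw [rpow_neg hxp.le, ← div_eq_mul_inv, one_le_div (by positivity)]
      exact rpow_le_rpow hxp.le h h0.le
    have h3 : 0 ≤ C * R ^ (β - α) * ‖x‖ ^ (-β) := by positivity
    have h4 : |m| ≤ |m| * R ^ β * ‖x‖ ^ (-β) := by
      rw [mul_assoc]; exact le_mul_of_one_le_right (abs_nonneg _) h2
    linarith

/-- Decay of the Riesz potential of a fast-decaying density in dimension `N ≥ 3`: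
`∫_{ℝ^N} ρ(y)|x−y|^{σ−N} dy ≤ C |x|^{σ−N/r}` for a.e. `x ∈ ℝ^N`. -/
theorem riesz_potential_decay_dim_ge_three
    (N : ℕ) (hN : 3 ≤ N) (σ : ℝ) (hσ0 : 0 < σ) (hσ2 : σ < 2)
    (ρ : EuclideanSpace ℝ (Fin N) → ℝ) (hρc : Continuous ρ)
    (hρpos : ∀ x, 0 < ρ x)
    (Ccheck Rcheck α : ℝ) (hC : 0 < Ccheck) (hR : 0 < Rcheck) (hα : σ < α)
    (hdecay : ∀ x : EuclideanSpace ℝ (Fin N), Rcheck ≤ ‖x‖ →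
      ρ x ≤ Ccheck * ‖x‖ ^ (-α))
    (r : ℝ) (hr1 : (N : ℝ) / α < r) (hr2 : 2 / σ < r) (hr3 : r < (N : ℝ) / σ) :
    ∃ C > 0, ∀ᵐ x : EuclideanSpace ℝ (Fin N),
      (∫⁻ y : EuclideanSpace ℝ (Fin N),
          ENNReal.ofReal (ρ y * ‖x - y‖ ^ (σ - (N : ℝ))))
        ≤ ENNReal.ofReal (C * ‖x‖ ^ (σ - (N : ℝ) / r)) := by
  have hN' : (3 : ℝ) ≤ N := by exact_mod_cast hN
  have hrp : 0 < r := lt_trans (by positivity) hr2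
  have hαp : 0 < α := hσ0.trans hα
  have hσβ : σ < (N : ℝ) / r := by
    rw [lt_div_iff₀ hσ0] at hr3
    rw [lt_div_iff₀ hrp]; linarith
  have hβα : (N : ℝ) / r < α := by
    rw [div_lt_iff₀ hαp] at hr1
    rw [div_lt_iff₀ hrp]; linarith
  have hβN : (N : ℝ) / r < N := by
    have : 1 < r := lt_trans (by rw [lt_div_iff₀ hσ0]; linarith) hr2
    exact div_lt_self (by linarith) this
  set β := (N : ℝ) / r
  obtain ⟨K, hK, hKb⟩ := riesz_aux_bound N ρ hρc Ccheck Rcheck α β hC hR (hσ0.trans hσβ) hβα hdecay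
  obtain ⟨M, hM, hMb⟩ := riesz_aux_unif N hN σ β hσ0 hσβ hβN
  have : NeZero N := ⟨by omega⟩
  refine ⟨K * M, by positivity, ?_⟩
  have hne : ∀ᵐ x : EuclideanSpace ℝ (Fin N), x ≠ 0 := by
    have := Measure.ae_ne (volume : Measure (EuclideanSpace ℝ (Fin N))) 0
    exact this
  filter_upwards [hne] with x hx
  have ht : 0 < ‖x‖ := norm_pos_iff.2 hx
  set t := ‖x‖ with htdef
  set e := t⁻¹ • x with hedef
  have he : ‖e‖ = 1 := by
    rw [hedef, norm_smul, norm_inv, Real.norm_of_nonneg ht.le, ← htdef, inv_mul_cancel₀ ht.ne']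
  set F : EuclideanSpace ℝ (Fin N) → ENNReal := fun z =>
    ENNReal.ofReal (‖z‖ ^ (-β) * ‖e - z‖ ^ (σ - (N : ℝ))) with hF
  have hFm : Measurable F := by fun_prop
  have hsc : ∫⁻ y, F (t⁻¹ • y) = ENNReal.ofReal (t ^ N) * ∫⁻ z, F z := by
    rw [← lintegral_map hFm (measurable_const_smul t⁻¹),
      Measure.map_addHaar_smul volume (inv_ne_zero ht.ne'), lintegral_smul_measure]
    simp [abs_of_pos ht]
  calc ∫⁻ y, ENNReal.ofReal (ρ y * ‖x - y‖ ^ (σ - (N : ℝ)))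
      ≤ ∫⁻ y, ENNReal.ofReal (K * t ^ (σ - N - β)) * F (t⁻¹ • y) := by
        refine lintegral_mono_ae ?_
        filter_upwards [hne] with y hy
        rw [hF, ← ENNReal.ofReal_mul (by positivity)]
        refine ENNReal.ofReal_le_ofReal ?_
        have h1 : ‖t⁻¹ • y‖ = t⁻¹ * ‖y‖ := by
          rw [norm_smul, norm_inv, Real.norm_of_nonneg ht.le]
        have h2 : ‖e - t⁻¹ • y‖ = t⁻¹ * ‖x - y‖ := by
          rw [hedef, ← smul_sub, norm_smul, norm_inv, Real.norm_of_nonneg ht.le]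
        rw [h1, h2, mul_rpow (by positivity) (by positivity),
          mul_rpow (by positivity) (by positivity)]
        have h3 : t ^ (σ - N - β) * (t⁻¹ ^ (-β) * t⁻¹ ^ (σ - (N : ℝ))) = 1 := by
          rw [inv_rpow ht.le, inv_rpow ht.le, ← rpow_neg ht.le, ← rpow_neg ht.le,
            ← rpow_add ht, ← rpow_add ht]
          convert rpow_zero t using 2; ring
        calc ρ y * ‖x - y‖ ^ (σ - (N : ℝ))
            ≤ K * ‖y‖ ^ (-β) * ‖x - y‖ ^ (σ - (N : ℝ)) :=
              mul_le_mul_of_nonneg_right (hKb y hy) (by positivity)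
          _ = K * ‖y‖ ^ (-β) * ‖x - y‖ ^ (σ - (N : ℝ)) *
              (t ^ (σ - N - β) * (t⁻¹ ^ (-β) * t⁻¹ ^ (σ - (N : ℝ)))) := by rw [h3, mul_one]
          _ = _ := by ring
    _ = ENNReal.ofReal (K * t ^ (σ - N - β)) * (ENNReal.ofReal (t ^ N) * ∫⁻ z, F z) := by
        have hFm' : Measurable fun y => F (t⁻¹ • y) := hFm.comp (measurable_const_smul t⁻¹)
        rw [lintegral_const_mul _ hFm', hsc]
    _ ≤ ENNReal.ofReal (K * t ^ (σ - N - β)) * (ENNReal.ofReal (t ^ N) * ENNReal.ofReal M) := by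
        gcongr
        exact hMb e he
    _ = ENNReal.ofReal (K * M * t ^ (σ - β)) := by
        rw [← ENNReal.ofReal_mul (by positivity), ← ENNReal.ofReal_mul (by positivity)]
        congr 1
        have : t ^ (σ - β) = t ^ (σ - N - β) * t ^ N := by
          rw [← rpow_natCast t N, ← rpow_add ht]; congr 1; ring
        rw [this]; ring
end

section
/- Let p > 1 satisfy α < (pσ − N)/(p − 1) and set q = p/(p−1). Then ∫_{ℝ^N} ρ(x)^{−p/q} |(−Δ)^{σ/2} φ_R(x)|^p dx → 0 as R → ∞. -/
open MeasureTheory Real Filter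

lemma aux_vol (N : ℕ) (c : EuclideanSpace ℝ (Fin N)) :
    volume.real (Metric.closedBall c 2)
      = volume.real (Metric.closedBall (0 : EuclideanSpace ℝ (Fin N)) 2) := by
  rw [measureReal_def, measureReal_def, Measure.addHaar_closedBall_center volume c 2]

lemma aux_ker_integrable (N : ℕ) (hN : 1 ≤ N) (σ : ℝ) (hσ0 : 0 < σ) (hσ2 : σ < 2)
    (K : ℝ) (hK : 0 ≤ K) :
    Integrable (fun z : EuclideanSpace ℝ (Fin N) =>
      min 2 (K * ‖z‖ ^ 2) / ‖z‖ ^ ((N : ℝ) + σ)) := by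
  have : Nonempty (Fin N) := ⟨⟨0, hN⟩⟩
  have key := integrable_fun_norm_addHaar (E := EuclideanSpace ℝ (Fin N)) (F := ℝ) volume
    (f := fun r : ℝ => min 2 (K * r ^ 2) / r ^ ((N : ℝ) + σ))
  refine key.2 ?_
  rw [finrank_euclideanSpace_fin]
  have hmeas : Measurable (fun y : ℝ => y ^ (N - 1) • (min 2 (K * y ^ 2) / y ^ ((N : ℝ) + σ))) := by
    fun_prop
  have hpow : ∀ y : ℝ, 0 < y → y ^ (N - 1) = y ^ ((N : ℝ) - 1) := by
    intro y hy
    rw [← Real.rpow_natCast, Nat.cast_sub hN, Nat.cast_one]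
  rw [← Set.Ioo_union_Ici_eq_Ioi (zero_lt_one : (0 : ℝ) < 1)]
  refine IntegrableOn.union ?_ ?_
  · have h1 : IntegrableOn (fun y : ℝ => K * y ^ (1 - σ)) (Set.Ioo 0 1) :=
      ((intervalIntegral.integrableOn_Ioo_rpow_iff zero_lt_one).2 (by linarith)).const_mul K
    refine Integrable.mono' h1 hmeas.aestronglyMeasurable ?_
    refine (ae_restrict_iff' measurableSet_Ioo).2 (Eventually.of_forall ?_)
    intro y hy
    have hy0 : 0 < y := hy.1
    have hnn : 0 ≤ min 2 (K * y ^ 2) := le_min (by norm_num) (by positivity)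
    rw [Real.norm_of_nonneg (by rw [smul_eq_mul]; positivity), smul_eq_mul, hpow y hy0]
    have e : K * y ^ (1 - σ) = y ^ ((N : ℝ) - 1) * (K * y ^ 2 / y ^ ((N : ℝ) + σ)) := by
      have : y ^ (1 - σ) = y ^ ((N : ℝ) - 1) * (y ^ (2 : ℝ) / y ^ ((N : ℝ) + σ)) := by
        rw [← Real.rpow_sub hy0, ← Real.rpow_add hy0]; congr 1; ring
      rw [this, Real.rpow_two]; ring
    rw [e]
    gcongr
    exact min_le_right _ _
  · rw [integrableOn_Ici_iff_integrableOn_Ioi]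
    have h1 : IntegrableOn (fun y : ℝ => 2 * y ^ (-1 - σ)) (Set.Ioi 1) :=
      (integrableOn_Ioi_rpow_of_lt (by linarith) zero_lt_one).const_mul 2
    refine Integrable.mono' h1 hmeas.aestronglyMeasurable ?_
    refine (ae_restrict_iff' measurableSet_Ioi).2 (Eventually.of_forall ?_)
    intro y hy
    have hy0 : 0 < y := lt_trans zero_lt_one hy
    have hnn : 0 ≤ min 2 (K * y ^ 2) := le_min (by norm_num) (by positivity)
    rw [Real.norm_of_nonneg (by rw [smul_eq_mul]; positivity), smul_eq_mul, hpow y hy0]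
    have e : 2 * y ^ (-1 - σ) = y ^ ((N : ℝ) - 1) * (2 / y ^ ((N : ℝ) + σ)) := by
      have : y ^ (-1 - σ) = y ^ ((N : ℝ) - 1) / y ^ ((N : ℝ) + σ) := by
        rw [← Real.rpow_sub hy0]; congr 1; ring
      rw [this]; ring
    rw [e]
    gcongr
    exact min_le_left _ _

lemma aux_second_diff (N : ℕ) (g : EuclideanSpace ℝ (Fin N) → ℝ) (hg : ContDiff ℝ 2 g)
    (hc : HasCompactSupport g) :
    ∃ K : ℝ, 0 ≤ K ∧ ∀ y z, |2 * g y - g (y + z) - g (y - z)| ≤ K * ‖z‖ ^ 2 := by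
  obtain ⟨C, hC⟩ := ContDiff.lipschitzWith_of_hasCompactSupport (𝕂 := ℝ) (n := 1) (hc.fderiv ℝ)
    (hg.fderiv_right (m := 1) (by norm_num)) (by norm_num)
  refine ⟨2 * C, by positivity, ?_⟩
  intro y z
  have hd : Differentiable ℝ g := hg.differentiable (by norm_num)
  have hp : ∀ t : ℝ, HasDerivAt (fun t : ℝ => g (y + t • z) + g (y - t • z))
      (fderiv ℝ g (y + t • z) z - fderiv ℝ g (y - t • z) z) t := by
    intro t
    have h1 : HasDerivAt (fun t : ℝ => y + t • z) z t := by
      simpa using ((hasDerivAt_id t).smul_const z).const_add y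
    have h2 : HasDerivAt (fun t : ℝ => y - t • z) (-z) t := by
      simpa using ((hasDerivAt_id t).smul_const z).const_sub y
    have h3 := (hd (y + t • z)).hasFDerivAt.comp_hasDerivAt t h1
    have h4 := (hd (y - t • z)).hasFDerivAt.comp_hasDerivAt t h2
    have h5 := h3.add h4
    rw [map_neg, ← sub_eq_add_neg] at h5
    exact h5
  have := norm_image_sub_le_of_norm_deriv_le_segment_01' (C := 2 * C * ‖z‖ ^ 2)
    (fun t _ => (hp t).hasDerivWithinAt) (by
      intro t ht
      rw [← _root_.sub_apply]
      refine (ContinuousLinearMap.le_opNorm _ _).trans ?_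
      have h := hC.norm_sub_le (y + t • z) (y - t • z)
      have e : y + t • z - (y - t • z) = (2 * t) • z := by rw [mul_smul, two_smul]; abel
      rw [e, norm_smul, Real.norm_of_nonneg (by linarith [ht.1])] at h
      have h2 : (C : ℝ) * (2 * t * ‖z‖) ≤ 2 * C * ‖z‖ := by
        have : 0 ≤ (C : ℝ) * ‖z‖ := by positivity
        nlinarith [ht.2]
      calc _ ≤ (2 * C * ‖z‖) * ‖z‖ := by gcongr; exact h.trans h2
        _ = _ := by ring)
  rw [← norm_neg, Real.norm_eq_abs] at this
  convert this using 2
  simp; ring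

lemma aux_contDiff (N : ℕ) (η : ℝ → ℝ) (hη_smooth : ContDiff ℝ (⊤ : ℕ∞) η)
    (hη_one : ∀ s : ℝ, 0 ≤ s → s ≤ 1 → η s = 1) :
    ContDiff ℝ 2 (fun y : EuclideanSpace ℝ (Fin N) => η ‖y‖) := by
  rw [contDiff_iff_contDiffAt]
  intro y
  by_cases hy : y = 0
  · subst hy
    have : (fun y : EuclideanSpace ℝ (Fin N) => η ‖y‖) =ᶠ[nhds 0] fun _ => 1 := by
      filter_upwards [Metric.ball_mem_nhds (0 : EuclideanSpace ℝ (Fin N)) zero_lt_one] with z hz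
      exact hη_one _ (norm_nonneg _) (by simpa using (mem_ball_zero_iff.1 hz).le)
    exact contDiffAt_const.congr_of_eventuallyEq this
  · have h2 : ContDiff ℝ 2 η := by exact_mod_cast contDiff_infty.1 hη_smooth 2
    exact h2.contDiffAt.comp y (contDiffAt_norm ℝ hy)

lemma aux_compact (N : ℕ) (η : ℝ → ℝ) (hη_zero : ∀ s : ℝ, 2 ≤ s → η s = 0) :
    HasCompactSupport (fun y : EuclideanSpace ℝ (Fin N) => η ‖y‖) := by
  refine HasCompactSupport.intro (isCompact_closedBall 0 2) ?_
  intro x hx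
  apply hη_zero
  rw [mem_closedBall_zero_iff] at hx
  linarith

/-- Scaling. -/
lemma aux_scale (N : ℕ) (σ : ℝ) (η : ℝ → ℝ) (R : ℝ) (hR : 0 < R) (x : EuclideanSpace ℝ (Fin N)) :
    fracLap N σ (fun y => η (‖y‖ / R)) x
      = R ^ (-σ) * fracLap N σ (fun y => η ‖y‖) (R⁻¹ • x) := by
  unfold fracLap
  have hn : ∀ y : EuclideanSpace ℝ (Fin N), ‖y‖ / R = ‖R⁻¹ • y‖ := by
    intro y; rw [norm_smul, Real.norm_of_nonneg (by positivity)]; field_simp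
  have key := Measure.integral_comp_smul (volume : Measure (EuclideanSpace ℝ (Fin N)))
    (fun z : EuclideanSpace ℝ (Fin N) =>
      (2 * η ‖R⁻¹ • x‖ - η ‖R⁻¹ • x + z‖ - η ‖R⁻¹ • x - z‖) / ‖z‖ ^ ((N : ℝ) + σ)) R⁻¹
  rw [finrank_euclideanSpace_fin, abs_of_pos (by positivity), inv_pow, inv_inv, smul_eq_mul] at key
  have e : ∀ z : EuclideanSpace ℝ (Fin N),
      (2 * η (‖x‖ / R) - η (‖x + z‖ / R) - η (‖x - z‖ / R)) / ‖z‖ ^ ((N : ℝ) + σ)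
      = R ^ (-((N : ℝ) + σ)) * ((2 * η ‖R⁻¹ • x‖ - η ‖R⁻¹ • x + R⁻¹ • z‖ - η ‖R⁻¹ • x - R⁻¹ • z‖)
        / ‖R⁻¹ • z‖ ^ ((N : ℝ) + σ)) := by
    intro z
    rw [hn x, hn (x + z), hn (x - z), smul_add, smul_sub]
    rw [← hn z, Real.div_rpow (norm_nonneg _) hR.le, Real.rpow_neg hR.le]
    have : R ^ ((N : ℝ) + σ) ≠ 0 := by positivity
    field_simp
  simp_rw [e]
  rw [integral_const_mul, key]
  have : R ^ (-σ) = R ^ (-((N : ℝ) + σ)) * R ^ N := by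
    rw [← Real.rpow_natCast R N, ← Real.rpow_add hR]; congr 1; ring
  rw [this]; ring

set_option maxHeartbeats 1000000 in
lemma aux_bound (N : ℕ) (hN : 1 ≤ N) (σ : ℝ) (hσ0 : 0 < σ) (hσ2 : σ < 2)
    (η : ℝ → ℝ) (hη_smooth : ContDiff ℝ (⊤ : ℕ∞) η)
    (hη_range : ∀ s : ℝ, 0 ≤ s → η s ∈ Set.Icc (0 : ℝ) 1)
    (hη_one : ∀ s : ℝ, 0 ≤ s → s ≤ 1 → η s = 1)
    (hη_zero : ∀ s : ℝ, 2 ≤ s → η s = 0) :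
    ∃ C : ℝ, 0 ≤ C ∧ ∀ y : EuclideanSpace ℝ (Fin N),
      |fracLap N σ (fun y => η ‖y‖) y| ≤ C * (1 + ‖y‖) ^ (-((N : ℝ) + σ)) := by
  obtain ⟨K, hK, hKb⟩ := aux_second_diff N _ (aux_contDiff N η hη_smooth hη_one)
    (aux_compact N η hη_zero)
  set m : ℝ := (N : ℝ) + σ with hm
  have hm0 : 0 < m := by positivity
  set A : ℝ := ∫ z : EuclideanSpace ℝ (Fin N), min 2 (K * ‖z‖ ^ 2) / ‖z‖ ^ m with hA
  set V : ℝ := volume.real (Metric.closedBall (0 : EuclideanSpace ℝ (Fin N)) 2) with hV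
  have hV0 : 0 ≤ V := measureReal_nonneg
  have hA0 : 0 ≤ A := by
    apply integral_nonneg; intro z
    have hnn : 0 ≤ min 2 (K * ‖z‖ ^ 2) := le_min (by norm_num) (by positivity)
    simp only [Pi.zero_apply]; positivity
  set D := |fracC N σ / 2| with hD
  have hD0 : 0 ≤ D := abs_nonneg _
  refine ⟨D * (A * 5 ^ m + 2 * V * 4 ^ m), by positivity, ?_⟩
  intro y
  unfold fracLap
  rw [abs_mul, mul_assoc]
  refine mul_le_mul_of_nonneg_left ?_ hD0
  have hpos : 0 < (1 + ‖y‖) := by positivity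
  rw [add_mul]
  by_cases hy : ‖y‖ ≤ 4
  · have h1 : |∫ z : EuclideanSpace ℝ (Fin N),
        (2 * η ‖y‖ - η ‖y + z‖ - η ‖y - z‖) / ‖z‖ ^ m| ≤ A := by
      rw [← Real.norm_eq_abs]
      refine norm_integral_le_of_norm_le (aux_ker_integrable N hN σ hσ0 hσ2 K hK) ?_
      refine Eventually.of_forall fun z => ?_
      rw [norm_div, Real.norm_eq_abs, Real.norm_of_nonneg (by positivity : 0 ≤ ‖z‖ ^ m)]
      gcongr
      refine le_min ?_ (hKb y z)
      have a1 := hη_range ‖y‖ (norm_nonneg _)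
      have a2 := hη_range ‖y + z‖ (norm_nonneg _)
      have a3 := hη_range ‖y - z‖ (norm_nonneg _)
      rw [abs_le]
      constructor <;> linarith [a1.1, a1.2, a2.1, a2.2, a3.1, a3.2]
    have h2 : 1 ≤ (5 : ℝ) ^ m * (1 + ‖y‖) ^ (-m) := by
      rw [Real.rpow_neg hpos.le, ← div_eq_mul_inv, one_le_div (by positivity)]
      exact Real.rpow_le_rpow hpos.le (by linarith) hm0.le
    have h3 : 0 ≤ 2 * V * 4 ^ m * (1 + ‖y‖) ^ (-m) := by positivity
    have h4 : A ≤ A * 5 ^ m * (1 + ‖y‖) ^ (-m) := by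
      rw [mul_assoc]; exact le_mul_of_one_le_right hA0 h2
    linarith
  · push Not at hy
    have h1 : |∫ z : EuclideanSpace ℝ (Fin N),
        (2 * η ‖y‖ - η ‖y + z‖ - η ‖y - z‖) / ‖z‖ ^ m| ≤
        ∫ z : EuclideanSpace ℝ (Fin N),
          ((Metric.closedBall (-y) 2).indicator (fun _ => 4 ^ m * (1 + ‖y‖) ^ (-m)) z
          + (Metric.closedBall y 2).indicator (fun _ => 4 ^ m * (1 + ‖y‖) ^ (-m)) z) := by
      rw [← Real.norm_eq_abs]
      refine norm_integral_le_of_norm_le ?_ ?_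
      · refine Integrable.add ?_ ?_ <;>
        · refine (integrable_indicator_iff measurableSet_closedBall).2 ?_
          exact integrableOn_const (measure_closedBall_lt_top.ne)
      refine Eventually.of_forall fun z => ?_
      rw [hη_zero ‖y‖ (by linarith)]
      have gen : ∀ w c : EuclideanSpace ℝ (Fin N), ‖w‖ = dist z c → ‖c‖ = ‖y‖ →
          |η ‖w‖ / ‖z‖ ^ m| ≤
          (Metric.closedBall c 2).indicator (fun _ => 4 ^ m * (1 + ‖y‖) ^ (-m)) z := by
        intro w c hw hc
        by_cases hz : z ∈ Metric.closedBall c 2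
        · rw [Set.indicator_of_mem hz]
          rw [Metric.mem_closedBall] at hz
          have a := hη_range ‖w‖ (norm_nonneg _)
          have hzz : (1 + ‖y‖) / 4 ≤ ‖z‖ := by
            have : ‖c‖ - ‖z‖ ≤ dist z c := by
              rw [dist_comm, dist_eq_norm]; exact norm_sub_norm_le _ _
            linarith
          have hz0 : 0 < ‖z‖ := lt_of_lt_of_le (by positivity) hzz
          rw [abs_of_nonneg (div_nonneg a.1 (by positivity))]
          calc η ‖w‖ / ‖z‖ ^ m ≤ 1 / ((1 + ‖y‖) / 4) ^ m := by
                gcongr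
                exact a.2
            _ = _ := by
                rw [Real.div_rpow hpos.le (by norm_num), Real.rpow_neg hpos.le]
                field_simp
        · rw [Set.indicator_of_notMem hz]
          rw [Metric.mem_closedBall, not_le, ← hw] at hz
          rw [hη_zero _ hz.le]; simp
      have g1 := gen (y + z) (-y) (by rw [dist_eq_norm, sub_neg_eq_add, add_comm]) (norm_neg _)
      have g2 := gen (y - z) y (by rw [dist_comm, dist_eq_norm]) rfl
      rw [Real.norm_eq_abs]
      have : (2 * 0 - η ‖y + z‖ - η ‖y - z‖) / ‖z‖ ^ m
          = -(η ‖y + z‖ / ‖z‖ ^ m + η ‖y - z‖ / ‖z‖ ^ m) := by ring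
      rw [this, abs_neg]
      exact (abs_add_le _ _).trans (add_le_add g1 g2)
    refine h1.trans ?_
    clear h1
    have hv : ∀ c : EuclideanSpace ℝ (Fin N), volume.real (Metric.closedBall c 2) = V := by
      intro c
      exact aux_vol N c
    have hnn : 0 ≤ A * 5 ^ m * (1 + ‖y‖) ^ (-m) :=
      mul_nonneg (mul_nonneg hA0 (Real.rpow_nonneg (by norm_num) _)) (Real.rpow_nonneg hpos.le _)
    have hii : ∀ (c : EuclideanSpace ℝ (Fin N)) (W : ℝ), Integrable
        (fun z => (Metric.closedBall c 2).indicator (fun _ => W) z) := fun c W =>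
      (integrable_indicator_iff measurableSet_closedBall).2
        (integrableOn_const measure_closedBall_lt_top.ne)
    rw [integral_add (hii _ _) (hii _ _), integral_indicator_const _ measurableSet_closedBall,
      integral_indicator_const _ measurableSet_closedBall, hv, hv, smul_eq_mul]
    linarith

lemma aux_weight (N : ℕ) (ρ : EuclideanSpace ℝ (Fin N) → ℝ) (hρc : Continuous ρ)
    (hρpos : ∀ x, 0 < ρ x)
    (Chat Rhat α : ℝ) (hChat : 0 < Chat) (hRhat : 0 < Rhat) (hα0 : 0 < α)
    (hlower : ∀ x : EuclideanSpace ℝ (Fin N), Rhat ≤ ‖x‖ →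
      Chat * ‖x‖ ^ (-α) ≤ ρ x) (s : ℝ) (hs : 0 < s) :
    ∃ M : ℝ, 0 ≤ M ∧ ∀ x, ρ x ^ (-s) ≤ M * (1 + ‖x‖) ^ (α * s) := by
  have hcont : Continuous fun x => ρ x ^ (-s) :=
    hρc.rpow_const fun x => Or.inl (hρpos x).ne'
  obtain ⟨M, hM⟩ := (isCompact_closedBall (0 : EuclideanSpace ℝ (Fin N)) Rhat).exists_bound_of_continuousOn
    hcont.continuousOn
  refine ⟨max M 0 + Chat ^ (-s), by positivity, fun x => ?_⟩
  have h1 : 0 ≤ max M 0 := le_max_right _ _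
  have h2 : 0 < Chat ^ (-s) := by positivity
  by_cases hx : ‖x‖ ≤ Rhat
  · have := (le_abs_self _).trans (hM x (by simpa using hx))
    have h3 : 1 ≤ (1 + ‖x‖) ^ (α * s) := Real.one_le_rpow (by simp) (by positivity)
    have h4 := le_max_left M 0
    nlinarith
  · push Not at hx
    have hx0 : 0 < ‖x‖ := hRhat.trans hx
    have h3 : ρ x ^ (-s) ≤ (Chat * ‖x‖ ^ (-α)) ^ (-s) :=
      Real.rpow_le_rpow_of_nonpos (by positivity) (hlower x hx.le) (by linarith)
    rw [Real.mul_rpow hChat.le (by positivity), ← Real.rpow_mul hx0.le, neg_mul_neg] at h3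
    refine h3.trans ?_
    gcongr
    · linarith
    · linarith

/-- For a slowly decaying density (`ρ(x) ≥ Ĉ|x|^{−α}` with `α < σ`) and `p`
with `α < (pσ−N)/(p−1)`, the weighted integral
`∫ ρ^{−p/q} |(−Δ)^{σ/2} φ_R|^p dx` tends to `0` as `R → ∞`. -/
theorem weighted_fracLap_cutoff_tendsto_zero
    (N : ℕ) (hN : 1 ≤ N) (σ : ℝ) (hσ0 : 0 < σ) (hσ2 : σ < 2)
    (η : ℝ → ℝ) (hη_smooth : ContDiff ℝ (⊤ : ℕ∞) η)
    (hη_range : ∀ s : ℝ, 0 ≤ s → η s ∈ Set.Icc (0 : ℝ) 1)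
    (hη_mono : AntitoneOn η (Set.Ici 0))
    (hη_one : ∀ s : ℝ, 0 ≤ s → s ≤ 1 → η s = 1)
    (hη_zero : ∀ s : ℝ, 2 ≤ s → η s = 0)
    (ρ : EuclideanSpace ℝ (Fin N) → ℝ) (hρc : Continuous ρ)
    (hρpos : ∀ x, 0 < ρ x)
    (Chat Rhat α : ℝ) (hChat : 0 < Chat) (hRhat : 0 < Rhat)
    (hα0 : 0 < α) (hασ : α < σ)
    (hlower : ∀ x : EuclideanSpace ℝ (Fin N), Rhat ≤ ‖x‖ →
      Chat * ‖x‖ ^ (-α) ≤ ρ x)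
    (p q : ℝ) (hp : 1 < p) (hq : q = p / (p - 1))
    (hcond : α < (p * σ - (N : ℝ)) / (p - 1)) :
    Tendsto
      (fun R : ℝ =>
        ∫⁻ x : EuclideanSpace ℝ (Fin N),
          ENNReal.ofReal
            (ρ x ^ (-(p / q)) * |fracLap N σ (fun y => η (‖y‖ / R)) x| ^ p))
      atTop (nhds 0) := by
  obtain ⟨C, hC0, hC⟩ := aux_bound N hN σ hσ0 hσ2 η hη_smooth hη_range hη_one hη_zero
  have hp1 : 0 < p - 1 := by linarith
  have hpq : p / q = p - 1 := by
    rw [hq]; field_simp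
  obtain ⟨M, hM0, hM⟩ := aux_weight N ρ hρc hρpos Chat Rhat α hChat hRhat hα0 hlower (p - 1) hp1
  rw [hpq]
  have hc : α * (p - 1) < p * σ - N := (lt_div_iff₀ hp1).1 hcond
  set m : ℝ := (N : ℝ) + σ with hm
  set r : ℝ := m * p - α * (p - 1) with hr
  have hrN : (N : ℝ) < r := by
    have : (0 : ℝ) ≤ N * p := by positivity
    have h1 : (1 : ℝ) ≤ N := by exact_mod_cast hN
    rw [hr, hm]; nlinarith
  have hint : Integrable (fun x : EuclideanSpace ℝ (Fin N) => (1 + ‖x‖) ^ (-r)) :=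
    integrable_one_add_norm (by rw [finrank_euclideanSpace_fin]; exact hrN)
  set I : ℝ := ∫ x : EuclideanSpace ℝ (Fin N), (1 + ‖x‖) ^ (-r) with hI
  set e : ℝ := p * σ - N - α * (p - 1) with he
  have he0 : 0 < e := by rw [he]; linarith
  have hbound : ∀ R : ℝ, 1 ≤ R →
      (∫⁻ x : EuclideanSpace ℝ (Fin N),
          ENNReal.ofReal
            (ρ x ^ (-(p - 1)) * |fracLap N σ (fun y => η (‖y‖ / R)) x| ^ p))
      ≤ ENNReal.ofReal (M * C ^ p * I * R ^ (-e)) := by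
    intro R hR
    have hR0 : 0 < R := by linarith
    have hint2 : Integrable (fun x : EuclideanSpace ℝ (Fin N) =>
        M * C ^ p * R ^ (-(e + N)) * (1 + ‖R⁻¹ • x‖) ^ (-r)) :=
      (hint.comp_smul (inv_ne_zero hR0.ne')).const_mul _
    have hval : ∫ x : EuclideanSpace ℝ (Fin N),
        M * C ^ p * R ^ (-(e + N)) * (1 + ‖R⁻¹ • x‖) ^ (-r) = M * C ^ p * I * R ^ (-e) := by
      rw [integral_const_mul, Measure.integral_comp_smul volume
        (fun x : EuclideanSpace ℝ (Fin N) => (1 + ‖x‖) ^ (-r)), finrank_euclideanSpace_fin,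
        abs_of_pos (by positivity), inv_pow, inv_inv, smul_eq_mul, ← hI]
      have : R ^ (-e) = R ^ (-(e + N)) * R ^ N := by
        rw [← Real.rpow_natCast R N, ← Real.rpow_add hR0]; congr 1; ring
      rw [this]; ring
    rw [← hval, ofReal_integral_eq_lintegral_ofReal hint2
      (Eventually.of_forall fun x => by simp only [Pi.zero_apply]; positivity)]
    refine lintegral_mono fun x => ENNReal.ofReal_le_ofReal ?_
    rw [aux_scale N σ η R hR0 x, abs_mul, abs_of_pos (by positivity : 0 < R ^ (-σ))]
    set u : ℝ := 1 + ‖R⁻¹ • x‖ with hu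
    have hu0 : 0 < u := by positivity
    have h1 : 1 + ‖x‖ ≤ R * u := by
      rw [hu, norm_smul, Real.norm_of_nonneg (by positivity), mul_add, mul_one,
        mul_inv_cancel_left₀ hR0.ne']
      linarith
    have h2 : ρ x ^ (-(p - 1)) ≤ M * (R ^ (α * (p - 1)) * u ^ (α * (p - 1))) := by
      rw [← Real.mul_rpow hR0.le hu0.le]
      refine (hM x).trans ?_
      gcongr
    have h3 : (R ^ (-σ) * |fracLap N σ (fun y => η ‖y‖) (R⁻¹ • x)|) ^ p
        ≤ R ^ (-σ * p) * (C ^ p * u ^ (-m * p)) := by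
      have : (R ^ (-σ) * |fracLap N σ (fun y => η ‖y‖) (R⁻¹ • x)|) ^ p
        ≤ (R ^ (-σ) * (C * u ^ (-m))) ^ p := by
        gcongr
        exact hC _
      refine this.trans (le_of_eq ?_)
      rw [Real.mul_rpow (by positivity) (by positivity), Real.mul_rpow hC0 (by positivity),
        ← Real.rpow_mul hR0.le, ← Real.rpow_mul hu0.le]
    calc _ ≤ (M * (R ^ (α * (p - 1)) * u ^ (α * (p - 1)))) *
          (R ^ (-σ * p) * (C ^ p * u ^ (-m * p))) := by
          gcongr
      _ = M * C ^ p * (R ^ (α * (p - 1)) * R ^ (-σ * p)) *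
          (u ^ (α * (p - 1)) * u ^ (-m * p)) := by ring
      _ = _ := by
          rw [← Real.rpow_add hR0, ← Real.rpow_add hu0]
          congr 2
          · congr 1; rw [he]; ring
          · rw [hr]; ring
  have hlim : Tendsto (fun R : ℝ => ENNReal.ofReal (M * C ^ p * I * R ^ (-e))) atTop (nhds 0) := by
    have := (tendsto_rpow_neg_atTop he0).const_mul (M * C ^ p * I)
    rw [mul_zero] at this
    simpa using ENNReal.tendsto_ofReal this
  refine tendsto_of_tendsto_of_tendsto_of_le_of_le' tendsto_const_nhds hlim
    (Eventually.of_forall fun _ => zero_le) ?_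
  filter_upwards [eventually_ge_atTop 1] with R hR
  exact hbound R hR
end
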